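/- Let D be a digraph with m arcs and minimum outdegree d ≥ 4, let X, Y be a partition of V(D) with e(X) = 0, set θ := min{|θ(X₁,X₂)| : X₁,X₂ a partition of X}, X' := {x ∈ X : s(x) ≥ θ}, g := Σ_{x∈X∖X'} s(x), and b := (1/2)·Σ_{x∈X}(d(x) − s(x)). Let ε > 0 and suppose every y ∈ Y satisfies d(y) ≤ ε²m/4, and suppose |X'| = 2k+1 with k ≥ 1. Then either there exists a bipartition V(D) = V₁ ∪ V₂ with min{e(V₁,V₂), e(V₂,V₁)} ≥ ((d−1)/(2(2d−1)) − ε)·m, or, writing X' = {v₁,…,v_{2k+1}} with Δⱼ := s(vⱼ) and Δ₁ ≥ Δ₂ ≥ … ≥ Δ_{2k+1}, one has b > ((d²+2d−1)/(d−1))·Σ_{j=k}^{2k−1} Δⱼ − d·(Σ_{j=1}^{k−1} Δⱼ + Δ_{2k} + Δ_{2k+1}) + (d−1)·g + ((d−1)/(2d))·e(Y). -/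

import Mathlib

open Finset

/-- Number of arcs of the digraph `A` directed from a vertex of `S` to a vertex of `T`. -/
def dArcs {V : Type} [Fintype V] [DecidableEq V] (A : V → V → Prop) [DecidableRel A]
    (S T : Finset V) : ℕ :=
  ((S ×ˢ T).filter fun p => A p.1 p.2).card

/-- Outdegree of `x`. -/
def outDeg {V : Type} [Fintype V] (A : V → V → Prop) [DecidableRel A] (x : V) : ℕ :=
  (Finset.univ.filter fun y => A x y).card

/-- Indegree of `x`. -/
def inDeg {V : Type} [Fintype V] (A : V → V → Prop) [DecidableRel A] (x : V) : ℕ :=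
  (Finset.univ.filter fun y => A y x).card

/-- Degree of `x`: outdegree plus indegree. -/
def deg {V : Type} [Fintype V] (A : V → V → Prop) [DecidableRel A] (x : V) : ℕ :=
  outDeg A x + inDeg A x

/-- `s(x) = max{d⁺(x) − d⁻(x), d⁻(x) − d⁺(x)}`. -/
def sVal {V : Type} [Fintype V] (A : V → V → Prop) [DecidableRel A] (x : V) : ℤ :=
  max ((outDeg A x : ℤ) - (inDeg A x : ℤ)) ((inDeg A x : ℤ) - (outDeg A x : ℤ))

/-- The gap `θ(X₁,X₂) = (e(X₁,Y)+e(Y,X₂)) − (e(X₂,Y)+e(Y,X₁))`. -/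
def gap {V : Type} [Fintype V] [DecidableEq V] (A : V → V → Prop) [DecidableRel A]
    (X₁ X₂ Y : Finset V) : ℤ :=
  ((dArcs A X₁ Y : ℤ) + (dArcs A Y X₂ : ℤ)) - ((dArcs A X₂ Y : ℤ) + (dArcs A Y X₁ : ℤ))

/-!
Each vertex of `X` is placed in a chosen part, each vertex of `Xᶜ` is put into `V₁` with probability
`p`, and the random choices are derandomized at a cost of at most `ε m` arcs in either direction.

If `(2d - 1) θ ≤ m`, then `p = 1/2` and a partition of `X` of gap `θ` suffice. Otherwise
`|V| ≤ m / d < 2θ`, so the values `s(x)` on `X'` lie in an interval of length less than `θ`, and an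
exchange argument shows that the `k + 1` remaining vertices of `X'` outweigh any `k` of them by at
least `θ + g`. Among `v₁, …, v₂ₖ₋₁` some `k` vertices have the same sign of `s⁺`. Let them and
`X \ X'` send their larger bundle of arcs from `V₁` to `V₂` and the rest of `X'` from `V₂` to `V₁`,
and choose `p = 1/2 ± 1/(2d)` in favour of these `k` vertices. Both directed cuts then have the
required size unless `b` exceeds the stated bound.
-/

section Rounding

lemma one_sub_mem_Icc_zero_one {ι : Type*} {x : ι → ℝ} (hx : x ∈ Set.Icc 0 1) :
    1 - x ∈ Set.Icc 0 1 :=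
  ⟨sub_nonneg.2 hx.2, sub_le_self 1 hx.1⟩

variable {ι E : Type*} [NormedAddCommGroup E] [InnerProductSpace ℝ E]

lemma exists_zero_or_one_norm_add_smul_sq_le {p : ℝ} (hp : p ∈ Set.Icc 0 1) (a w : E) :
    ∃ t : ℝ, (t = 0 ∨ t = 1) ∧
      ‖a + (t - p) • w‖ ^ 2 ≤ ‖a‖ ^ 2 + p * (1 - p) * ‖w‖ ^ 2 := by
  have expand (t : ℝ) : ‖a + (t - p) • w‖ ^ 2 =
      ‖a‖ ^ 2 + 2 * (t - p) * inner ℝ a w + (t - p) ^ 2 * ‖w‖ ^ 2 := by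
    rw [norm_add_sq_real, real_inner_smul_right, norm_smul, mul_pow, Real.norm_eq_abs, sq_abs]
    ring
  have average : (1 - p) • ‖a + (0 - p) • w‖ ^ 2 + p • ‖a + (1 - p) • w‖ ^ 2 =
      ‖a‖ ^ 2 + p * (1 - p) * ‖w‖ ^ 2 := by
    rw [expand, expand, smul_eq_mul, smul_eq_mul]
    ring
  have hmin := (Convex.min_le_combo _ _ (sub_nonneg.2 hp.2) hp.1 (sub_add_cancel 1 p)).trans_eq
    average
  rcases min_le_iff.1 hmin with h | h
  exacts [⟨0, .inl rfl, h⟩, ⟨1, .inr rfl, h⟩]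

variable [DecidableEq ι] {F : (ι → ℝ) → E} {slope : (ι → ℝ) → ι → E} {c : ι → ℝ}

lemma exists_rounding_on
    (hF : ∀ x i t, F (Function.update x i t) = F x + (t - x i) • slope x i)
    (hslope : ∀ x ∈ Set.Icc (0 : ι → ℝ) 1, ∀ i, ‖slope x i‖ ^ 2 ≤ c i)
    {x₀ : ι → ℝ} (hx₀ : x₀ ∈ Set.Icc 0 1) (S : Finset ι) :
    ∃ x ∈ Set.Icc (0 : ι → ℝ) 1, (∀ i ∉ S, x i = x₀ i) ∧ (∀ i ∈ S, x i = 0 ∨ x i = 1) ∧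
      ‖F x - F x₀‖ ^ 2 ≤ ∑ i ∈ S, x₀ i * (1 - x₀ i) * c i := by
  induction S using Finset.induction_on with
  | empty => exact ⟨x₀, hx₀, by simp⟩
  | insert i S hi ih =>
    obtain ⟨x, hx, hxS, hx01, hle⟩ := ih
    have hp : x₀ i ∈ Set.Icc 0 1 := ⟨hx₀.1 i, hx₀.2 i⟩
    obtain ⟨t, ht, hround⟩ :=
      exists_zero_or_one_norm_add_smul_sq_le hp (F x - F x₀) (slope x i)
    have ht01 : t ∈ Set.Icc 0 1 := by rcases ht with rfl | rfl <;> simp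
    refine ⟨Function.update x i t, ⟨?_, ?_⟩, fun j hj => ?_, fun j hj => ?_, ?_⟩
    · exact le_update_iff.2 ⟨ht01.1, fun j _ => hx.1 j⟩
    · exact update_le_iff.2 ⟨ht01.2, fun j _ => hx.2 j⟩
    · rw [mem_insert, not_or] at hj
      rw [Function.update_of_ne hj.1, hxS j hj.2]
    · rcases eq_or_ne j i with rfl | hji
      · rwa [Function.update_self]
      · rw [Function.update_of_ne hji]
        exact hx01 j (mem_of_mem_insert_of_ne hj hji)
    · calc ‖F (Function.update x i t) - F x₀‖ ^ 2
          = ‖(F x - F x₀) + (t - x₀ i) • slope x i‖ ^ 2 := by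
            rw [hF, hxS i hi, add_sub_right_comm]
        _ ≤ ‖F x - F x₀‖ ^ 2 + x₀ i * (1 - x₀ i) * ‖slope x i‖ ^ 2 := hround
        _ ≤ ∑ j ∈ S, x₀ j * (1 - x₀ j) * c j + x₀ i * (1 - x₀ i) * c i :=
            add_le_add hle <| mul_le_mul_of_nonneg_left (hslope x hx i) <|
              mul_nonneg hp.1 (sub_nonneg.2 hp.2)
        _ = ∑ j ∈ insert i S, x₀ j * (1 - x₀ j) * c j := by rw [sum_insert hi, add_comm]

-- A derandomized Efron–Stein inequality: `x₀ i * (1 - x₀ i)` is the variance of the `i`-th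
-- coordinate when `x₀` is rounded at random with the right expectation.
lemma exists_finset_norm_sub_sq_le [Fintype ι]
    (hF : ∀ x i t, F (Function.update x i t) = F x + (t - x i) • slope x i)
    (hslope : ∀ x ∈ Set.Icc (0 : ι → ℝ) 1, ∀ i, ‖slope x i‖ ^ 2 ≤ c i)
    {x₀ : ι → ℝ} (hx₀ : x₀ ∈ Set.Icc 0 1) :
    ∃ T : Finset ι, ‖F ((T : Set ι).indicator 1) - F x₀‖ ^ 2 ≤
      ∑ i, x₀ i * (1 - x₀ i) * c i := by
  obtain ⟨x, -, -, hx, hle⟩ := exists_rounding_on hF hslope hx₀ univ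
  refine ⟨univ.filter fun i => x i = 1, ?_⟩
  convert hle
  ext i
  rcases hx i (mem_univ i) with h | h <;> simp [h]

end Rounding

section Counting

variable {V : Type} [Fintype V] [DecidableEq V] {A : V → V → Prop} [DecidableRel A]
  {S T X : Finset V}

lemma dArcs_eq_sum (S T : Finset V) :
    dArcs A S T = ∑ u ∈ S, ∑ v ∈ T, if A u v then 1 else 0 := by
  rw [dArcs, card_filter, sum_product]

lemma dArcs_add_dArcs_compl_right (S T : Finset V) :
    dArcs A S T + dArcs A S Tᶜ = ∑ u ∈ S, outDeg A u := by
  simp only [dArcs_eq_sum, outDeg, card_filter, ← sum_add_distrib, sum_add_sum_compl]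

lemma dArcs_add_dArcs_compl_left (S T : Finset V) :
    dArcs A S T + dArcs A Sᶜ T = ∑ v ∈ T, inDeg A v := by
  rw [dArcs_eq_sum, dArcs_eq_sum, sum_add_sum_compl, sum_comm]
  simp only [inDeg, card_filter]

lemma dArcs_univ_univ_eq_sum_outDeg : dArcs A univ univ = ∑ u, outDeg A u := by
  simp only [dArcs_eq_sum, outDeg, card_filter]

lemma dArcs_univ_univ_eq_sum_inDeg : dArcs A univ univ = ∑ v, inDeg A v := by
  rw [dArcs_eq_sum, sum_comm]
  simp only [inDeg, card_filter]

lemma sum_deg_le (S : Finset V) : ∑ v ∈ S, deg A v ≤ 2 * dArcs A univ univ :=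
  calc ∑ v ∈ S, deg A v ≤ ∑ v, deg A v := sum_le_sum_of_subset (subset_univ S)
    _ = 2 * dArcs A univ univ := by
      simp only [deg, sum_add_distrib]
      rw [← dArcs_univ_univ_eq_sum_outDeg, ← dArcs_univ_univ_eq_sum_inDeg, two_mul]

lemma mul_card_le_dArcs_univ_univ {d : ℕ} (hd : ∀ x, d ≤ outDeg A x) :
    d * Fintype.card V ≤ dArcs A univ univ := by
  rw [dArcs_univ_univ_eq_sum_outDeg, mul_comm]
  exact card_nsmul_le_sum univ (outDeg A) d fun x _ => hd x

lemma dArcs_eq_zero_mono (hX : dArcs A X X = 0) (hS : S ⊆ X) (hT : T ⊆ X) : dArcs A S T = 0 :=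
  Nat.eq_zero_of_le_zero <|
    hX ▸ card_le_card (filter_subset_filter _ (product_subset_product hS hT))

lemma dArcs_compl_right_eq_sum_outDeg (hX : dArcs A X X = 0) (hS : S ⊆ X) :
    dArcs A S Xᶜ = ∑ x ∈ S, outDeg A x := by
  rw [← dArcs_add_dArcs_compl_right S X, dArcs_eq_zero_mono hX hS subset_rfl, zero_add]

lemma dArcs_compl_left_eq_sum_inDeg (hX : dArcs A X X = 0) (hS : S ⊆ X) :
    dArcs A Xᶜ S = ∑ x ∈ S, inDeg A x := by
  rw [← dArcs_add_dArcs_compl_left X S, dArcs_eq_zero_mono hX subset_rfl hS, zero_add]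

lemma dArcs_univ_univ_eq_add_sum_deg (hX : dArcs A X X = 0) :
    dArcs A univ univ = dArcs A Xᶜ Xᶜ + ∑ x ∈ X, deg A x := by
  simp only [deg, sum_add_distrib]
  rw [← dArcs_compl_left_eq_sum_inDeg hX subset_rfl, dArcs_univ_univ_eq_sum_outDeg,
    ← sum_add_sum_compl X, ← dArcs_add_dArcs_compl_right Xᶜ X]
  ring

end Counting

section DirectedCuts

open scoped Matrix

variable {V : Type} [Fintype V]

/-- The adjacency matrix of the digraph `A`. -/
def arcMatrix (A : V → V → Prop) [DecidableRel A] : Matrix V V ℝ :=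
  Matrix.of fun u v => if A u v then 1 else 0

/-- The multilinear extension of the size of a directed cut: if every vertex `v` joins `V₁`
independently with probability `x v`, the expected number of arcs from `V₁` to its complement. -/
def cutExt (A : V → V → Prop) [DecidableRel A] (x : V → ℝ) : ℝ :=
  x ⬝ᵥ arcMatrix A *ᵥ (1 - x)

/-- The partial derivative of `cutExt A` at `x` in the coordinate `y`. -/
def cutDeriv (A : V → V → Prop) [DecidableRel A] (x : V → ℝ) (y : V) : ℝ :=
  (arcMatrix A *ᵥ (1 - x)) y - (x ᵥ* arcMatrix A) y

variable {A : V → V → Prop} [DecidableRel A]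

lemma mulVec_arcMatrix_mem_Icc {f : V → ℝ} (hf : f ∈ Set.Icc 0 1) (y : V) :
    (arcMatrix A *ᵥ f) y ∈ Set.Icc 0 (outDeg A y : ℝ) := by
  simp only [Matrix.mulVec, dotProduct, arcMatrix, Matrix.of_apply, ite_mul, one_mul, zero_mul,
    ← sum_filter]
  exact ⟨sum_nonneg fun v _ => hf.1 v,
    (sum_le_card_nsmul _ _ 1 fun v _ => hf.2 v).trans_eq (nsmul_one _)⟩

lemma vecMul_arcMatrix_mem_Icc {f : V → ℝ} (hf : f ∈ Set.Icc 0 1) (y : V) :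
    (f ᵥ* arcMatrix A) y ∈ Set.Icc 0 (inDeg A y : ℝ) := by
  simp only [Matrix.vecMul, dotProduct, arcMatrix, Matrix.of_apply, mul_ite, mul_one, mul_zero,
    ← sum_filter]
  exact ⟨sum_nonneg fun v _ => hf.1 v,
    (sum_le_card_nsmul _ _ 1 fun v _ => hf.2 v).trans_eq (nsmul_one _)⟩

lemma sq_cutDeriv_le {x : V → ℝ} (hx : x ∈ Set.Icc 0 1) (y : V) :
    cutDeriv A x y ^ 2 ≤ (deg A y : ℝ) ^ 2 := by
  have hout := mulVec_arcMatrix_mem_Icc (A := A) (one_sub_mem_Icc_zero_one hx) y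
  have hin := vecMul_arcMatrix_mem_Icc (A := A) hx y
  rw [deg, Nat.cast_add, cutDeriv]
  exact sq_le_sq' (by linarith [hout.1, hout.2, hin.2]) (by linarith [hout.2, hin.1, hin.2])

variable [DecidableEq V]

lemma cutExt_update (hirr : ∀ v, ¬ A v v) (x : V → ℝ) (y : V) (t : ℝ) :
    cutExt A (Function.update x y t) = cutExt A x + (t - x y) * cutDeriv A x y := by
  have hupdate : Function.update x y t = x + (t - x y) • Pi.single y 1 := by
    ext v
    rcases eq_or_ne v y with rfl | h <;> simp [*]
  have hdiag : arcMatrix A y y = 0 := if_neg (hirr y)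
  have hone : 1 - (x + (t - x y) • Pi.single y 1) = (1 - x) - (t - x y) • Pi.single y 1 := by abel
  rw [cutExt, cutExt, cutDeriv, hupdate, hone, Matrix.mulVec_sub, Matrix.mulVec_smul,
    dotProduct_sub, add_dotProduct, add_dotProduct, smul_dotProduct, smul_dotProduct,
    dotProduct_smul, dotProduct_smul, Matrix.dotProduct_mulVec x, single_one_dotProduct,
    Matrix.dotProduct_mulVec x, dotProduct_single_one]
  simp only [hdiag, Matrix.mulVec_single_one, single_one_dotProduct, Matrix.col_apply, smul_eq_mul]
  ring

lemma indicator_dotProduct_arcMatrix_mulVec_indicator (S T : Finset V) :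
    (S : Set V).indicator 1 ⬝ᵥ arcMatrix A *ᵥ (T : Set V).indicator 1 = (dArcs A S T : ℝ) := by
  simp [dArcs_eq_sum, dotProduct, Matrix.mulVec, arcMatrix, Set.indicator_apply]

/-- The fractional vertex set that contains each vertex of `X₁` fully, each vertex outside `X` with
weight `p`, and no other vertex. -/
noncomputable def fracSet (X X₁ : Finset V) (p : ℝ) : V → ℝ :=
  (X₁ : Set V).indicator 1 + p • ((Xᶜ : Finset V) : Set V).indicator 1

lemma fracSet_of_mem {X X₁ : Finset V} {p : ℝ} {v : V} (hv : v ∈ X) :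
    fracSet X X₁ p v = if v ∈ X₁ then 1 else 0 := by
  simp [fracSet, Set.indicator_apply, hv]

lemma fracSet_of_notMem {X X₁ : Finset V} (hX₁ : X₁ ⊆ X) {p : ℝ} {v : V} (hv : v ∉ X) :
    fracSet X X₁ p v = p := by
  simp [fracSet, hv, notMem_mono hX₁ hv]

lemma one_sub_fracSet {X X₁ : Finset V} (hX₁ : X₁ ⊆ X) (p : ℝ) :
    1 - fracSet X X₁ p = fracSet X (X \ X₁) (1 - p) := by
  ext v
  rw [Pi.sub_apply, Pi.one_apply]
  by_cases hv : v ∈ X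
  · by_cases h : v ∈ X₁ <;> simp [fracSet_of_mem hv, hv, h]
  · rw [fracSet_of_notMem hX₁ hv, fracSet_of_notMem sdiff_subset hv]

lemma fracSet_mem_Icc {X X₁ : Finset V} (hX₁ : X₁ ⊆ X) {p : ℝ} (hp : p ∈ Set.Icc 0 1) :
    fracSet X X₁ p ∈ Set.Icc 0 1 := by
  have h (v : V) : fracSet X X₁ p v ∈ Set.Icc 0 1 := by
    by_cases hv : v ∈ X
    · rw [fracSet_of_mem hv]; split_ifs <;> simp
    · rwa [fracSet_of_notMem hX₁ hv]
  exact ⟨fun v => (h v).1, fun v => (h v).2⟩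

lemma le_cutExt_fracSet {X X₁ : Finset V} (hX₁ : X₁ ⊆ X) (p : ℝ) :
    (1 - p) * dArcs A X₁ Xᶜ + p * dArcs A Xᶜ (X \ X₁) + p * (1 - p) * dArcs A Xᶜ Xᶜ ≤
      cutExt A (fracSet X X₁ p) := by
  rw [cutExt, one_sub_fracSet hX₁, fracSet, fracSet]
  simp only [Matrix.mulVec_add, Matrix.mulVec_smul, add_dotProduct, dotProduct_add,
    smul_dotProduct, dotProduct_smul, indicator_dotProduct_arcMatrix_mulVec_indicator,
    smul_eq_mul]
  linarith [Nat.cast_nonneg (α := ℝ) (dArcs A X₁ (X \ X₁))]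

/-- Some bipartition of the vertex set has at least `c` arcs in each direction. -/
def HasDirectedCuts (A : V → V → Prop) [DecidableRel A] (c : ℝ) : Prop :=
  ∃ S : Finset V, c ≤ min (dArcs A S Sᶜ : ℝ) (dArcs A Sᶜ S : ℝ)

lemma cutExt_indicator (S : Finset V) :
    cutExt A ((S : Set V).indicator 1) = dArcs A S Sᶜ := by
  rw [cutExt, ← indicator_dotProduct_arcMatrix_mulVec_indicator, coe_compl, Set.indicator_compl]

lemma cutExt_one_sub_indicator (S : Finset V) :
    cutExt A (1 - (S : Set V).indicator 1) = dArcs A Sᶜ S := by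
  have h : 1 - (S : Set V).indicator (1 : V → ℝ) = ((Sᶜ : Finset V) : Set V).indicator 1 := by
    rw [coe_compl, Set.indicator_compl]
  rw [h, cutExt_indicator, compl_compl]

/-- The extensions of the two cuts as one vector, so that both are rounded simultaneously. -/
def cutPair (A : V → V → Prop) [DecidableRel A] (x : V → ℝ) : EuclideanSpace ℝ (Fin 2) :=
  !₂[cutExt A x, cutExt A (1 - x)]

lemma cutPair_update (hirr : ∀ v, ¬ A v v) (x : V → ℝ) (y : V) (t : ℝ) :
    cutPair A (Function.update x y t) =
      cutPair A x + (t - x y) • !₂[cutDeriv A x y, -cutDeriv A (1 - x) y] := by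
  have hcompl : 1 - Function.update x y t = Function.update (1 - x) y (1 - t) := by
    ext v
    rcases eq_or_ne v y with rfl | h <;> simp [*]
  ext i
  fin_cases i
  · simp [cutPair, cutExt_update hirr]
  · simp [cutPair, hcompl, cutExt_update hirr]
    ring

lemma sum_deg_sq_le {S : Finset V} {K : ℝ} (hK : 0 ≤ K) (hS : ∀ v ∈ S, (deg A v : ℝ) ≤ K) :
    ∑ v ∈ S, (deg A v : ℝ) ^ 2 ≤ 2 * K * dArcs A univ univ :=
  calc ∑ v ∈ S, (deg A v : ℝ) ^ 2 ≤ ∑ v ∈ S, K * deg A v :=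
        sum_le_sum fun v hv => by
          rw [sq]; exact mul_le_mul_of_nonneg_right (hS v hv) (Nat.cast_nonneg _)
    _ = K * (∑ v ∈ S, deg A v : ℕ) := by rw [← mul_sum, Nat.cast_sum]
    _ ≤ K * (2 * dArcs A univ univ : ℕ) :=
        mul_le_mul_of_nonneg_left (Nat.cast_le.2 (sum_deg_le S)) hK
    _ = 2 * K * dArcs A univ univ := by push_cast; ring

lemma exists_norm_cutPair_sub_le (hirr : ∀ v, ¬ A v v) {X X₁ : Finset V} (hX₁ : X₁ ⊆ X)
    {p : ℝ} (hp : p ∈ Set.Icc 0 1) {ε : ℝ} (hε : 0 ≤ ε)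
    (hdeg : ∀ y ∈ Xᶜ, (deg A y : ℝ) ≤ ε ^ 2 * dArcs A univ univ) :
    ∃ S : Finset V, ‖cutPair A ((S : Set V).indicator 1) - cutPair A (fracSet X X₁ p)‖ ≤
      ε * dArcs A univ univ := by
  have hslope (x : V → ℝ) (hx : x ∈ Set.Icc 0 1) (y : V) :
      ‖!₂[cutDeriv A x y, -cutDeriv A (1 - x) y]‖ ^ 2 ≤ 2 * (deg A y : ℝ) ^ 2 := by
    simp only [EuclideanSpace.norm_sq_eq, Fin.sum_univ_two, Real.norm_eq_abs, sq_abs]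
    simpa [two_mul] using
      add_le_add (sq_cutDeriv_le hx y) (sq_cutDeriv_le (one_sub_mem_Icc_zero_one hx) y)
  obtain ⟨S, hS⟩ := exists_finset_norm_sub_sq_le (cutPair_update hirr) hslope
    (fracSet_mem_Icc hX₁ hp)
  refine ⟨S, (sq_le_sq₀ (norm_nonneg _) (by positivity)).1 (hS.trans ?_)⟩
  have hvar : p * (1 - p) ≤ 1 / 4 := by linarith [sq_nonneg (p - 1 / 2)]
  rw [← sum_add_sum_compl X, sum_eq_zero fun v hv => by
    rw [fracSet_of_mem hv]; split_ifs <;> simp, zero_add]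
  calc ∑ v ∈ Xᶜ, fracSet X X₁ p v * (1 - fracSet X X₁ p v) * (2 * (deg A v : ℝ) ^ 2)
      ≤ ∑ v ∈ Xᶜ, 1 / 4 * (2 * (deg A v : ℝ) ^ 2) := sum_le_sum fun v hv => by
        rw [fracSet_of_notMem hX₁ (mem_compl.1 hv)]
        exact mul_le_mul_of_nonneg_right hvar (by positivity)
    _ = 1 / 2 * ∑ v ∈ Xᶜ, (deg A v : ℝ) ^ 2 := by
        rw [mul_sum]; exact sum_congr rfl fun v _ => by ring
    _ ≤ 1 / 2 * (2 * (ε ^ 2 * dArcs A univ univ) * dArcs A univ univ) :=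
        mul_le_mul_of_nonneg_left (sum_deg_sq_le (by positivity) hdeg) (by norm_num)
    _ = (ε * dArcs A univ univ) ^ 2 := by ring

-- The hypotheses bound from below the expected sizes of the two cuts when `X₁` is put into `V₁`,
-- `X \ X₁` into `V₂`, and each vertex outside `X` into `V₁` with probability `p`.
lemma hasDirectedCuts_of_le (hirr : ∀ v, ¬ A v v) {X X₁ : Finset V} (hX₁ : X₁ ⊆ X)
    {p : ℝ} (hp : p ∈ Set.Icc 0 1) {ε : ℝ} (hε : 0 ≤ ε)
    (hdeg : ∀ y ∈ Xᶜ, (deg A y : ℝ) ≤ ε ^ 2 * dArcs A univ univ) {c : ℝ}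
    (hfwd : c ≤ (1 - p) * dArcs A X₁ Xᶜ + p * dArcs A Xᶜ (X \ X₁) +
      p * (1 - p) * dArcs A Xᶜ Xᶜ)
    (hbwd : c ≤ (1 - p) * dArcs A Xᶜ X₁ + p * dArcs A (X \ X₁) Xᶜ +
      p * (1 - p) * dArcs A Xᶜ Xᶜ) :
    HasDirectedCuts A (c - ε * dArcs A univ univ) := by
  obtain ⟨S, hS⟩ := exists_norm_cutPair_sub_le hirr hX₁ hp hε hdeg
  have hdev (i : Fin 2) := abs_le.1 ((PiLp.norm_apply_le _ i).trans hS)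
  have hdev₁ := (hdev 0).1
  have hdev₂ := (hdev 1).1
  simp only [cutPair, PiLp.sub_apply, cutExt_indicator, cutExt_one_sub_indicator,
    one_sub_fracSet hX₁] at hdev₁ hdev₂
  have hfwd' := hfwd.trans (le_cutExt_fracSet hX₁ p)
  have hbwd' := le_cutExt_fracSet (A := A) (X := X) sdiff_subset (1 - p) (X₁ := X \ X₁)
  rw [Finset.sdiff_sdiff_eq_self hX₁] at hbwd'
  simp only [Matrix.cons_val_zero, Matrix.cons_val_one] at hdev₁ hdev₂
  exact ⟨S, le_min (by linarith) (by linarith)⟩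

end DirectedCuts

section SubsetSums

variable {ι R : Type*} [CommRing R] [LinearOrder R] [IsStrictOrderedRing R] {f : ι → R}
  {S T U : Finset ι}

lemma exists_subset_abs_sub_sum_lt {r t : R} (hf : ∀ i ∈ S, 0 ≤ f i ∧ f i < 2 * r)
    (hlo : -r < t) (hhi : t < r + ∑ i ∈ S, f i) : ∃ B ⊆ S, |t - ∑ i ∈ B, f i| < r := by
  classical
  induction S using Finset.induction_on generalizing t with
  | empty => exact ⟨∅, subset_rfl, by
    rw [sum_empty, add_zero] at hhi
    rw [sum_empty, sub_zero]
    exact abs_lt.2 ⟨hlo, hhi⟩⟩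
  | insert a S ha ih =>
    obtain ⟨hfa, hfS⟩ := forall_mem_insert _ _ _ |>.1 hf
    rw [sum_insert ha] at hhi
    rcases lt_or_ge t (r + ∑ i ∈ S, f i) with hskip | htake
    · obtain ⟨B, hBS, hB⟩ := ih hfS hlo hskip
      exact ⟨B, hBS.trans (subset_insert a S), hB⟩
    · have hS : 0 ≤ ∑ i ∈ S, f i := sum_nonneg fun i hi => (hfS i hi).1
      obtain ⟨B, hBS, hB⟩ := ih (t := t - f a) hfS (by linarith) (by linarith)
      refine ⟨insert a B, insert_subset_insert a hBS, ?_⟩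
      rwa [sum_insert (notMem_mono hBS ha), ← sub_sub]

lemma sum_le_sum_of_forall_le_of_card_eq (hTU : ∀ x ∈ T, ∀ y ∈ U, f x ≤ f y) (hcard : #T = #U) :
    ∑ x ∈ T, f x ≤ ∑ y ∈ U, f y := by
  rcases U.eq_empty_or_nonempty with rfl | hU
  · rw [card_eq_zero.1 hcard]
  · obtain ⟨b, hb, hmin⟩ := exists_min_image U f hU
    calc ∑ x ∈ T, f x ≤ #T • f b := sum_le_card_nsmul T f _ fun x hx => hTU x hx b hb
      _ = #U • f b := by rw [hcard]
      _ ≤ ∑ y ∈ U, f y := card_nsmul_le_sum U f _ hmin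

lemma two_mul_sum_le_sum_of_forall_le [DecidableEq ι] (hT : T ⊆ S) (hcard : 2 * #T ≤ #S)
    (hf : ∀ i ∈ S, 0 ≤ f i) (hle : ∀ x ∈ T, ∀ y ∈ S \ T, f x ≤ f y) :
    2 * ∑ i ∈ T, f i ≤ ∑ i ∈ S, f i := by
  obtain ⟨U, hU, hUcard⟩ : ∃ U ⊆ S \ T, #U = #T :=
    exists_subset_card_eq (by rw [card_sdiff_of_subset hT]; omega)
  have hTU := sum_le_sum_of_forall_le_of_card_eq (fun x hx y hy => hle x hx y (hU hy)) hUcard.symm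
  have hUS := sum_le_sum_of_subset_of_nonneg hU fun i hi _ => hf i (mem_sdiff.1 hi).1
  linarith [sum_sdiff (f := f) hT]

-- Exchanging an element of `U` for a smaller one outside changes `∑ S - 2 ∑ U` by less than `2 c`,
-- so this quantity cannot cross the forbidden interval `(-c, c)`; once `U` consists of the smallest
-- elements of `S` it is nonnegative.
lemma le_sum_sub_two_mul_sum {c : R} (hf : ∀ i ∈ S, 0 ≤ f i)
    (hclose : ∀ i ∈ S, ∀ j ∈ S, f i - f j < c)
    (hgap : ∀ T ⊆ S, c ≤ |∑ i ∈ S, f i - 2 * ∑ i ∈ T, f i|)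
    (hU : U ⊆ S) (hcard : 2 * #U ≤ #S) : c ≤ ∑ i ∈ S, f i - 2 * ∑ i ∈ U, f i := by
  classical
  by_contra! hlt
  obtain ⟨T, hT, hmin⟩ := exists_min_image
    ({T ∈ S.powersetCard #U | ∑ i ∈ S, f i - 2 * ∑ i ∈ T, f i < c}) (fun T => ∑ i ∈ T, f i)
    ⟨U, mem_filter.2 ⟨mem_powersetCard.2 ⟨hU, rfl⟩, hlt⟩⟩
  simp only [mem_filter, mem_powersetCard] at hT hmin
  obtain ⟨⟨hTS, hTcard⟩, hTlt⟩ := hT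
  have hTneg : ∑ i ∈ S, f i - 2 * ∑ i ∈ T, f i ≤ -c :=
    (le_abs'.1 (hgap T hTS)).resolve_right hTlt.not_ge
  have hlow : ∀ x ∈ T, ∀ y ∈ S \ T, f x ≤ f y := by
    intro x hx y hy
    obtain ⟨hyS, hyT⟩ := mem_sdiff.1 hy
    by_contra! hyx
    have hyT' : y ∉ T.erase x := fun h => hyT (mem_of_mem_erase h)
    have hswap : ∑ i ∈ insert y (T.erase x), f i = ∑ i ∈ T, f i - (f x - f y) := by
      rw [sum_insert hyT', sum_erase_eq_sub hx]
      ring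
    have hswapcard : #(insert y (T.erase x)) = #U := by
      rw [card_insert_of_notMem hyT', card_erase_add_one hx, hTcard]
    have hle := hmin (insert y (T.erase x))
      ⟨⟨insert_subset hyS ((erase_subset x T).trans hTS), hswapcard⟩, by
        linarith [hclose x (hTS hx) y hyS]⟩
    linarith
  linarith [two_mul_sum_le_sum_of_forall_le hTS (hTcard ▸ hcard) hf hlow]

lemma exists_subset_card_eq_monochromatic (P : ι → Prop) {k : ℕ} (hk : 2 * k ≤ #S + 1) :
    ∃ J ⊆ S, #J = k ∧ ((∀ j ∈ J, P j) ∨ ∀ j ∈ J, ¬ P j) := by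
  classical
  have hcard := card_filter_add_card_filter_not (s := S) P
  rcases le_or_gt k #(S.filter P) with h | h
  · obtain ⟨J, hJ, hJk⟩ := exists_subset_card_eq h
    exact ⟨J, hJ.trans (filter_subset _ _), hJk, .inl fun j hj => (mem_filter.1 (hJ hj)).2⟩
  · obtain ⟨J, hJ, hJk⟩ :=
      exists_subset_card_eq (show k ≤ #(S.filter (¬ P ·)) by omega)
    exact ⟨J, hJ.trans (filter_subset _ _), hJk, .inr fun j hj => (mem_filter.1 (hJ hj)).2⟩

lemma sum_Icc_le_sum_of_antitoneOn [LinearOrder ι] [LocallyFiniteOrder ι] {a b n : ι}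
    (hf : AntitoneOn f (Set.Icc a n)) (hab : a ≤ b) {J : Finset ι} (hJ : J ⊆ Icc a n)
    (hcard : #J = #(Icc b n)) : ∑ j ∈ Icc b n, f j ≤ ∑ j ∈ J, f j := by
  rw [← sum_sdiff_le_sum_sdiff]
  refine sum_le_sum_of_forall_le_of_card_eq (fun j hj i hi => ?_) (card_sdiff_comm hcard.symm)
  have hj' := mem_Icc.1 (mem_sdiff.1 hj).1
  have hi' := mem_Icc.1 (hJ (mem_sdiff.1 hi).1)
  have hib : i < b := lt_of_not_ge fun h =>
    (mem_sdiff.1 hi).2 (mem_Icc.2 ⟨h, hi'.2⟩)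
  exact hf hi' ⟨hab.trans hj'.1, hj'.2⟩ (hib.le.trans hj'.1)

lemma exists_monochromatic_subset_image [DecidableEq ι] (P : ι → Prop) {v : ℕ → ι} {k : ℕ}
    (hk : 1 ≤ k) (hinj : Set.InjOn v ↑(Icc 1 (2 * k + 1)))
    (hf : ∀ i ∈ Icc 1 (2 * k + 1), ∀ j ∈ Icc 1 (2 * k + 1), i ≤ j → f (v j) ≤ f (v i)) :
    ∃ U ⊆ (Icc 1 (2 * k + 1)).image v, #U = k ∧ ((∀ x ∈ U, P x) ∨ ∀ x ∈ U, ¬ P x) ∧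
      ∑ j ∈ Icc k (2 * k - 1), f (v j) ≤ ∑ x ∈ U, f x := by
  have hsub : Icc 1 (2 * k - 1) ⊆ Icc 1 (2 * k + 1) := Icc_subset_Icc_right (by omega)
  have hanti : AntitoneOn (f ∘ v) (Set.Icc 1 (2 * k - 1)) := fun i hi j hj =>
    hf i (hsub (mem_Icc.2 hi)) j (hsub (mem_Icc.2 hj))
  obtain ⟨J, hJ, hJk, hmono⟩ := exists_subset_card_eq_monochromatic (S := Icc 1 (2 * k - 1))
    (fun j => P (v j)) (k := k) (by rw [Nat.card_Icc]; omega)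
  have hJinj : Set.InjOn v J := hinj.mono (coe_subset.2 (hJ.trans hsub))
  refine ⟨J.image v, image_subset_image (hJ.trans hsub), (card_image_of_injOn hJinj).trans hJk,
    by simpa only [forall_mem_image] using hmono, ?_⟩
  rw [sum_image hJinj]
  exact sum_Icc_le_sum_of_antitoneOn hanti hk hJ (by rw [hJk, Nat.card_Icc]; omega)

end SubsetSums

lemma sum_Icc_one_two_mul_add_one {M : Type*} [AddCommMonoid M] (f : ℕ → M) {k : ℕ}
    (hk : 1 ≤ k) :
    ∑ j ∈ Icc 1 (2 * k + 1), f j = ∑ j ∈ Icc k (2 * k - 1), f j +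
      (∑ j ∈ Icc 1 (k - 1), f j + f (2 * k) + f (2 * k + 1)) := by
  obtain ⟨n, rfl⟩ := Nat.exists_eq_add_of_le' hk
  have hdouble : 2 * (n + 1) = 2 * n + 1 + 1 := by ring
  rw [show Icc 1 (2 * (n + 1) + 1) = Ioc 0 _ from Icc_add_one_left_eq_Ioc 0 _,
    show Icc 1 (n + 1 - 1) = Ioc 0 n from Icc_add_one_left_eq_Ioc 0 n,
    Icc_add_one_left_eq_Ioc n, hdouble, Nat.add_sub_cancel,
    sum_Ioc_succ_top (by omega), sum_Ioc_succ_top (by omega),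
    ← sum_Ioc_consecutive f (Nat.zero_le n) (show n ≤ 2 * n + 1 by omega)]
  abel

section Imbalance

variable {V : Type} [Fintype V] {A : V → V → Prop} [DecidableRel A]

lemma sVal_nonneg (x : V) : 0 ≤ sVal A x := by
  rw [sVal]
  omega

lemma sVal_le_card (x : V) : sVal A x ≤ Fintype.card V := by
  have hout : outDeg A x ≤ Fintype.card V := card_filter_le _ _
  have hin : inDeg A x ≤ Fintype.card V := card_filter_le _ _
  rw [sVal]
  omega

lemma sVal_of_le {x : V} (h : inDeg A x ≤ outDeg A x) :
    (sVal A x : ℝ) = outDeg A x - inDeg A x := by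
  rw [sVal, max_eq_left (by omega)]
  push_cast
  rfl

lemma sVal_of_not_le {x : V} (h : ¬ inDeg A x ≤ outDeg A x) :
    (sVal A x : ℝ) = inDeg A x - outDeg A x := by
  rw [sVal, max_eq_right (by omega)]
  push_cast
  rfl

lemma sVal_le_deg (x : V) : (sVal A x : ℝ) ≤ deg A x := by
  have h : sVal A x ≤ deg A x := by rw [sVal, deg]; omega
  exact_mod_cast h

variable [DecidableEq V] {X B U : Finset V}

/-- The part of `X` to be put into `V₁` so that, in the arcs between `X` and `Xᶜ`, each vertex of
`B` sends the larger of its two bundles of arcs from `V₁` to `V₂`, and each vertex of `X \ B` sends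
it from `V₂` to `V₁`. -/
def alignedPart (A : V → V → Prop) [DecidableRel A] (X B : Finset V) : Finset V :=
  X.filter fun x => x ∈ B ↔ inDeg A x ≤ outDeg A x

lemma alignedPart_subset : alignedPart A X B ⊆ X := filter_subset _ _

lemma sdiff_alignedPart : X \ alignedPart A X B = alignedPart A X (X \ B) := by
  ext x
  simp only [alignedPart, mem_sdiff, mem_filter]
  tauto

lemma mul_dArcs_add_mul_dArcs (hX : dArcs A X X = 0) {X₁ : Finset V} (hX₁ : X₁ ⊆ X) (α β : ℝ) :
    α * dArcs A X₁ Xᶜ + β * dArcs A Xᶜ (X \ X₁) =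
      ∑ x ∈ X, if x ∈ X₁ then α * outDeg A x else β * inDeg A x := by
  rw [dArcs_compl_right_eq_sum_outDeg hX hX₁, dArcs_compl_left_eq_sum_inDeg hX sdiff_subset,
    sum_ite, filter_mem_eq_inter, inter_eq_right.2 hX₁, filter_notMem_eq_sdiff, Nat.cast_sum,
    Nat.cast_sum, mul_sum, mul_sum]

lemma mul_dArcs_alignedPart_add (hX : dArcs A X X = 0) (hB : B ⊆ X) (α β : ℝ) :
    α * dArcs A (alignedPart A X B) Xᶜ + β * dArcs A Xᶜ (X \ alignedPart A X B) =
      ∑ x ∈ X, (if x ∈ alignedPart A X B then α else β) * (((deg A x : ℝ) - sVal A x) / 2) +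
        ∑ x ∈ B, (if inDeg A x ≤ outDeg A x then α else β) * sVal A x := by
  rw [mul_dArcs_add_mul_dArcs hX alignedPart_subset, ← inter_eq_right.2 hB, ← sum_ite_mem,
    inter_eq_right.2 hB, ← sum_add_distrib]
  refine sum_congr rfl fun x hx => ?_
  by_cases hle : inDeg A x ≤ outDeg A x <;> by_cases hxB : x ∈ B
  · simp only [alignedPart, mem_filter, hx, hle, hxB, true_and, if_true, deg, Nat.cast_add,
      sVal_of_le hle]
    ring
  · simp only [alignedPart, mem_filter, hx, hle, hxB, true_and, if_false, iff_true, deg,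
      Nat.cast_add, sVal_of_le hle]
    ring
  · simp only [alignedPart, mem_filter, hx, hle, hxB, true_and, if_true, if_false, iff_false,
      not_true, deg, Nat.cast_add, sVal_of_not_le hle]
    ring
  · simp only [alignedPart, mem_filter, hx, hle, hxB, true_and, if_true, if_false, deg,
      Nat.cast_add, sVal_of_not_le hle]
    ring

lemma le_mul_dArcs_alignedPart_add (hX : dArcs A X X = 0) (hUB : U ⊆ B) (hB : B ⊆ X)
    {α β γ δ : ℝ} (hα : γ ≤ α) (hβ : γ ≤ β)
    (hU : ∀ x ∈ U, δ ≤ if inDeg A x ≤ outDeg A x then α else β) :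
    γ * ((∑ x ∈ X, ((deg A x : ℝ) - sVal A x)) / 2 + ∑ x ∈ B \ U, (sVal A x : ℝ)) +
        δ * ∑ x ∈ U, (sVal A x : ℝ) ≤
      α * dArcs A (alignedPart A X B) Xᶜ + β * dArcs A Xᶜ (X \ alignedPart A X B) := by
  have hs (x : V) : (0 : ℝ) ≤ sVal A x := Int.cast_nonneg (sVal_nonneg x)
  have hmin (x : V) : 0 ≤ ((deg A x : ℝ) - sVal A x) / 2 :=
    div_nonneg (sub_nonneg.2 (sVal_le_deg x)) zero_le_two
  rw [mul_dArcs_alignedPart_add hX hB, ← sum_sdiff hUB, sum_div, mul_add, add_assoc, mul_sum,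
    mul_sum, mul_sum]
  refine add_le_add (sum_le_sum fun x _ => mul_le_mul_of_nonneg_right ?_ (hmin x)) (add_le_add
    (sum_le_sum fun x _ => mul_le_mul_of_nonneg_right ?_ (hs x))
    (sum_le_sum fun x hx => mul_le_mul_of_nonneg_right (hU x hx) (hs x)))
  all_goals split_ifs <;> assumption

lemma gap_alignedPart (hX : dArcs A X X = 0) (hB : B ⊆ X) :
    gap A (alignedPart A X B) (X \ alignedPart A X B) Xᶜ =
      2 * ∑ x ∈ B, sVal A x - ∑ x ∈ X, sVal A x := by
  have hfwd := mul_dArcs_alignedPart_add hX hB 1 1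
  have hbwd := mul_dArcs_alignedPart_add hX (sdiff_subset (s := X) (t := B)) 1 1
  rw [← sdiff_alignedPart, Finset.sdiff_sdiff_eq_self alignedPart_subset] at hbwd
  have hsum := sum_sdiff (f := fun x => (sVal A x : ℝ)) hB
  simp only [ite_self, one_mul] at hfwd hbwd
  have hgap : (gap A (alignedPart A X B) (X \ alignedPart A X B) Xᶜ : ℝ) =
      2 * ∑ x ∈ B, (sVal A x : ℝ) - ∑ x ∈ X, (sVal A x : ℝ) := by
    rw [gap]
    push_cast
    linarith
  exact_mod_cast hgap

variable {θ : ℤ}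

lemma le_abs_sum_sub_two_mul_sum (hX : dArcs A X X = 0)
    (hθ : ∀ X₁ ⊆ X, θ ≤ |gap A X₁ (X \ X₁) Xᶜ|) (hB : B ⊆ X) :
    θ ≤ |∑ x ∈ X, sVal A x - 2 * ∑ x ∈ B, sVal A x| := by
  rw [abs_sub_comm, ← gap_alignedPart hX hB]
  exact hθ _ alignedPart_subset

-- Otherwise the vertices of `X \ S`, whose values are less than `θ`, could be distributed so as to
-- push the gap below `θ`.
lemma add_sum_sdiff_le_abs_sum_sub_two_mul_sum (hX : dArcs A X X = 0)
    (hθ : ∀ X₁ ⊆ X, θ ≤ |gap A X₁ (X \ X₁) Xᶜ|) {S : Finset V} (hS : S ⊆ X)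
    (hsmall : ∀ x ∈ X \ S, sVal A x < θ) (hU : U ⊆ S) :
    θ + ∑ x ∈ X \ S, sVal A x ≤ |∑ x ∈ S, sVal A x - 2 * ∑ x ∈ U, sVal A x| := by
  by_contra! hlt
  have hsum := sum_sdiff (f := sVal A) hS
  obtain ⟨B, hB, hBlt⟩ := exists_subset_abs_sub_sum_lt (S := X \ S) (f := fun x => 2 * sVal A x)
    (r := θ) (t := ∑ x ∈ X, sVal A x - 2 * ∑ x ∈ U, sVal A x)
    (fun x hx => ⟨by linarith [sVal_nonneg (A := A) x], by linarith [hsmall x hx]⟩)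
    (by linarith [(abs_lt.1 hlt).1]) (by rw [← mul_sum]; linarith [(abs_lt.1 hlt).2])
  refine (le_abs_sum_sub_two_mul_sum hX hθ
    (union_subset (hU.trans hS) (hB.trans sdiff_subset))).not_gt ?_
  rwa [sum_union (disjoint_sdiff.mono hU hB), mul_add, ← sub_sub, mul_sum B]

lemma add_sum_sdiff_le_sum_sub_two_mul_sum (hX : dArcs A X X = 0)
    (hθ : ∀ X₁ ⊆ X, θ ≤ |gap A X₁ (X \ X₁) Xᶜ|) {S : Finset V}
    (hS : S = X.filter fun x => θ ≤ sVal A x) (hcard : Fintype.card V < 2 * θ)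
    (hU : U ⊆ S) (hUS : 2 * #U ≤ #S) :
    θ + ∑ x ∈ X \ S, sVal A x ≤ ∑ x ∈ S, sVal A x - 2 * ∑ x ∈ U, sVal A x := by
  have hSX : S ⊆ X := hS ▸ filter_subset _ X
  have hlarge : ∀ x ∈ S, θ ≤ sVal A x := fun x hx => by
    rw [hS] at hx
    exact (mem_filter.1 hx).2
  have hsmall : ∀ x ∈ X \ S, sVal A x < θ := fun x hx => by
    rw [hS, ← filter_not] at hx
    exact not_le.1 (mem_filter.1 hx).2
  have hrest : 0 ≤ ∑ x ∈ X \ S, sVal A x := sum_nonneg fun x _ => sVal_nonneg x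
  exact le_sum_sub_two_mul_sum (fun x _ => sVal_nonneg x)
    (fun x _ y hy => by linarith [sVal_le_card (A := A) x, hlarge y hy])
    (fun T hT => add_sum_sdiff_le_abs_sum_sub_two_mul_sum hX hθ hSX hsmall hT) hU hUS

end Imbalance

section LargeCuts

variable {V : Type} [Fintype V] [DecidableEq V] {A : V → V → Prop} [DecidableRel A]
  {X B U : Finset V} {ε : ℝ}

lemma HasDirectedCuts.mono {c c' : ℝ} (h : HasDirectedCuts A c) (hc : c' ≤ c) :
    HasDirectedCuts A c' :=
  h.imp fun _ hS => hc.trans hS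

lemma dArcs_univ_univ_eq_of_subset (hX : dArcs A X X = 0) {X₁ : Finset V} (hX₁ : X₁ ⊆ X) :
    dArcs A univ univ = (dArcs A X₁ Xᶜ + dArcs A Xᶜ (X \ X₁)) +
      (dArcs A (X \ X₁) Xᶜ + dArcs A Xᶜ X₁) + dArcs A Xᶜ Xᶜ := by
  rw [dArcs_univ_univ_eq_add_sum_deg hX, dArcs_compl_right_eq_sum_outDeg hX hX₁,
    dArcs_compl_right_eq_sum_outDeg hX sdiff_subset, dArcs_compl_left_eq_sum_inDeg hX hX₁,
    dArcs_compl_left_eq_sum_inDeg hX sdiff_subset, ← sum_sdiff hX₁]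
  simp only [deg, sum_add_distrib]
  ring

lemma hasDirectedCuts_sub_abs_gap_div_four (hirr : ∀ v, ¬ A v v) (hX : dArcs A X X = 0)
    (hε : 0 ≤ ε) (hdeg : ∀ y ∈ Xᶜ, (deg A y : ℝ) ≤ ε ^ 2 * dArcs A univ univ)
    {X₁ : Finset V} (hX₁ : X₁ ⊆ X) :
    HasDirectedCuts A
      ((dArcs A univ univ - |(gap A X₁ (X \ X₁) Xᶜ : ℝ)|) / 4 - ε * dArcs A univ univ) := by
  have hm : (dArcs A univ univ : ℝ) = _ :=
    congrArg Nat.cast (dArcs_univ_univ_eq_of_subset hX hX₁)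
  have hpos := le_abs_self (gap A X₁ (X \ X₁) Xᶜ : ℝ)
  have hneg := neg_le_abs (gap A X₁ (X \ X₁) Xᶜ : ℝ)
  rw [gap] at hpos hneg
  push_cast at hm hpos hneg
  refine hasDirectedCuts_of_le hirr hX₁ (p := 1 / 2) (by norm_num) hε hdeg ?_ ?_
  · rw [gap]; push_cast; linarith
  · rw [gap]; push_cast; linarith

-- Each vertex outside `X` joins `V₁` with probability `1/2 - q` or `1/2 + q`, whichever makes every
-- vertex of `U` send its larger bundle of arcs forward with probability `1/2 + q`.
lemma hasDirectedCuts_of_monochromatic (hirr : ∀ v, ¬ A v v) (hX : dArcs A X X = 0)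
    (hε : 0 ≤ ε) (hdeg : ∀ y ∈ Xᶜ, (deg A y : ℝ) ≤ ε ^ 2 * dArcs A univ univ)
    (hUB : U ⊆ B) (hB : B ⊆ X)
    (hU : (∀ x ∈ U, inDeg A x ≤ outDeg A x) ∨ ∀ x ∈ U, ¬ inDeg A x ≤ outDeg A x)
    {b : ℝ} (hb : b = (∑ x ∈ X, ((deg A x : ℝ) - sVal A x)) / 2)
    {q : ℝ} (hq : q ∈ Set.Icc 0 (1 / 2)) {c : ℝ}
    (hfwd : c ≤ (1 / 2 - q) * (b + ∑ x ∈ B \ U, (sVal A x : ℝ)) +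
      (1 / 2 + q) * ∑ x ∈ U, (sVal A x : ℝ) + (1 / 4 - q ^ 2) * dArcs A Xᶜ Xᶜ)
    (hbwd : c ≤ (1 / 2 - q) * (b + ∑ x ∈ X \ B, (sVal A x : ℝ)) +
      (1 / 4 - q ^ 2) * dArcs A Xᶜ Xᶜ) :
    HasDirectedCuts A (c - ε * dArcs A univ univ) := by
  obtain ⟨hq₀, hq₁⟩ := hq
  obtain ⟨p, hp₁, hp₂, hvar, hpU⟩ : ∃ p, 1 / 2 - q ≤ p ∧ 1 / 2 - q ≤ 1 - p ∧
      p * (1 - p) = 1 / 4 - q ^ 2 ∧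
      ∀ x ∈ U, 1 / 2 + q ≤ if inDeg A x ≤ outDeg A x then 1 - p else p := by
    rcases hU with hU | hU
    · refine ⟨1 / 2 - q, le_rfl, by linarith, by ring, fun x hx => ?_⟩
      rw [if_pos (hU x hx)]
      linarith
    · refine ⟨1 / 2 + q, by linarith, by linarith, by ring, fun x hx => ?_⟩
      rw [if_neg (hU x hx)]
  have hcut₁ := le_mul_dArcs_alignedPart_add hX hUB hB hp₂ hp₁ hpU
  have hcut₂ := le_mul_dArcs_alignedPart_add hX (empty_subset (X \ B)) sdiff_subset hp₁ hp₂
    (δ := 0) (by simp only [notMem_empty, false_imp_iff, implies_true])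
  rw [← sdiff_alignedPart, Finset.sdiff_sdiff_eq_self alignedPart_subset, sdiff_empty,
    ← hb] at hcut₂
  rw [← hb] at hcut₁
  refine hasDirectedCuts_of_le hirr alignedPart_subset
    ⟨by linarith, by linarith⟩ hε hdeg (p := p) (X₁ := alignedPart A X B) ?_ ?_
  · rw [hvar]; linarith
  · rw [hvar]; linarith

end LargeCuts

section Bounds

variable {d b e g u w m : ℝ}

-- The difference of the two sides is the positive multiple `(d - 1) / (2 d (2 d - 1))` of the
-- difference of the two sides of `hb`, with `u` and `w` in place of `Q` and `N`.
lemma le_fwd_of_le {Q N : ℝ} (hd : 1 < d) (hm : m = e + 2 * b + g + u + w) (hQ : Q ≤ u)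
    (hN : u + w = Q + N)
    (hb : b ≤ (d ^ 2 + 2 * d - 1) / (d - 1) * Q - d * N + (d - 1) * g + (d - 1) / (2 * d) * e) :
    (d - 1) / (2 * (2 * d - 1)) * m ≤
      (1 / 2 - 1 / (2 * d)) * (b + g) + (1 / 2 + 1 / (2 * d)) * u +
        (1 / 4 - (1 / (2 * d)) ^ 2) * e := by
  have hd₁ : 0 < d - 1 := by linarith
  have hd₂ : 0 < 2 * d - 1 := by linarith
  have hd₀ : 0 < d := by linarith
  have hcoef : 0 ≤ (d ^ 2 + 2 * d - 1) / (d - 1) := div_nonneg (by nlinarith) hd₁.le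
  have hQu := mul_le_mul_of_nonneg_left hQ hcoef
  have hwN : d * w ≤ d * N := mul_le_mul_of_nonneg_left (by linarith) hd₀.le
  have hdiff : (1 / 2 - 1 / (2 * d)) * (b + g) + (1 / 2 + 1 / (2 * d)) * u +
        (1 / 4 - (1 / (2 * d)) ^ 2) * e - (d - 1) / (2 * (2 * d - 1)) * m =
      (d - 1) / (2 * d * (2 * d - 1)) * ((d ^ 2 + 2 * d - 1) / (d - 1) * u - d * w +
        (d - 1) * g + (d - 1) / (2 * d) * e - b) := by
    rw [hm]
    field_simp
    ring
  rw [← sub_nonneg, hdiff]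
  exact mul_nonneg (by positivity) (by linarith)

lemma le_bwd_of_lt {θ : ℝ} (hd : 1 < d) (he : 0 ≤ e) (hm : m = e + 2 * b + g + u + w)
    (hθm : m < (2 * d - 1) * θ) (hθ : θ + g ≤ w - u) :
    (d - 1) / (2 * (2 * d - 1)) * m ≤
      (1 / 2 - 1 / (2 * d)) * (b + w) + (1 / 4 - (1 / (2 * d)) ^ 2) * e := by
  have hd₁ : 0 < d - 1 := by linarith
  have hd₂ : 0 < 2 * d - 1 := by linarith
  have hd₀ : 0 < d := by linarith
  have hθ' : (2 * d - 1) * (θ + g) ≤ (2 * d - 1) * (w - u) := mul_le_mul_of_nonneg_left hθ hd₂.le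
  have he' : 0 ≤ (d - 1) / (2 * d) * e :=
    mul_nonneg (div_nonneg hd₁.le (by linarith)) he
  have hdiff : (1 / 2 - 1 / (2 * d)) * (b + w) + (1 / 4 - (1 / (2 * d)) ^ 2) * e -
        (d - 1) / (2 * (2 * d - 1)) * m =
      (d - 1) / (2 * d * (2 * d - 1)) *
        (d * (w - u - g) - b - w + (d - 1) / (2 * d) * e) := by
    rw [hm]
    field_simp
    ring
  rw [← sub_nonneg, hdiff]
  exact mul_nonneg (div_nonneg hd₁.le (mul_pos (mul_pos two_pos hd₀) hd₂).le) (by linarith)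

end Bounds

section Main

variable {V : Type} [Fintype V] [DecidableEq V] {A : V → V → Prop} [DecidableRel A]
  {X : Finset V} {ε d : ℝ}

lemma hasDirectedCuts_of_mul_abs_gap_le (hirr : ∀ v, ¬ A v v) (hX : dArcs A X X = 0)
    (hε : 0 ≤ ε) (hdeg : ∀ y ∈ Xᶜ, (deg A y : ℝ) ≤ ε ^ 2 * dArcs A univ univ) (hd : 1 < d)
    {X₁ : Finset V} (hX₁ : X₁ ⊆ X)
    (hgap : (2 * d - 1) * |(gap A X₁ (X \ X₁) Xᶜ : ℝ)| ≤ dArcs A univ univ) :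
    HasDirectedCuts A (((d - 1) / (2 * (2 * d - 1)) - ε) * dArcs A univ univ) := by
  refine (hasDirectedCuts_sub_abs_gap_div_four hirr hX hε hdeg hX₁).mono ?_
  have hd₂ : 0 < 2 * d - 1 := by linarith
  have hcoef : (d - 1) / (2 * (2 * d - 1)) = (1 - 1 / (2 * d - 1)) / 4 := by
    rw [one_sub_div hd₂.ne']
    field_simp
    ring
  rw [mul_comm, ← le_div_iff₀ hd₂, div_eq_mul_one_div] at hgap
  rw [sub_mul, hcoef]
  linarith

lemma hasDirectedCuts_of_le_sum_sub_two_mul_sum (hirr : ∀ v, ¬ A v v) (hX : dArcs A X X = 0)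
    (hε : 0 ≤ ε) (hdeg : ∀ y ∈ Xᶜ, (deg A y : ℝ) ≤ ε ^ 2 * dArcs A univ univ) (hd : 1 < d)
    {S U : Finset V} (hS : S ⊆ X) (hUS : U ⊆ S)
    (hU : (∀ x ∈ U, inDeg A x ≤ outDeg A x) ∨ ∀ x ∈ U, ¬ inDeg A x ≤ outDeg A x)
    {b g Q N θ : ℝ} (hb : b = (∑ x ∈ X, ((deg A x : ℝ) - sVal A x)) / 2)
    (hg : g = ∑ x ∈ X \ S, (sVal A x : ℝ)) (hθ : dArcs A univ univ < (2 * d - 1) * θ)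
    (hdom : θ + g ≤ ∑ x ∈ S, (sVal A x : ℝ) - 2 * ∑ x ∈ U, (sVal A x : ℝ))
    (hQ : Q ≤ ∑ x ∈ U, (sVal A x : ℝ)) (hN : ∑ x ∈ S, (sVal A x : ℝ) = Q + N)
    (hle : b ≤ (d ^ 2 + 2 * d - 1) / (d - 1) * Q - d * N + (d - 1) * g +
      (d - 1) / (2 * d) * dArcs A Xᶜ Xᶜ) :
    HasDirectedCuts A (((d - 1) / (2 * (2 * d - 1)) - ε) * dArcs A univ univ) := by
  have hsumS := sum_sdiff (f := fun x => (sVal A x : ℝ)) hUS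
  have hsumX := sum_sdiff (f := fun x => (sVal A x : ℝ)) hS
  have hm : (dArcs A univ univ : ℝ) = dArcs A Xᶜ Xᶜ + 2 * b + g + ∑ x ∈ U, (sVal A x : ℝ) +
      ∑ x ∈ S \ U, (sVal A x : ℝ) := by
    rw [dArcs_univ_univ_eq_add_sum_deg hX, hb, hg, sum_sub_distrib]
    push_cast
    linarith
  have hq : 1 / (2 * d) ∈ Set.Icc 0 (1 / 2) :=
    ⟨by positivity, one_div_le_one_div_of_le two_pos (by linarith)⟩
  have hBU : (U ∪ X \ S) \ U = X \ S :=
    union_sdiff_cancel_left (disjoint_sdiff.mono_left hUS)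
  have hXB : X \ (U ∪ X \ S) = S \ U := by
    rw [union_comm, ← sup_eq_union, ← sdiff_sdiff, Finset.sdiff_sdiff_eq_self hS]
  rw [sub_mul]
  refine hasDirectedCuts_of_monochromatic (B := U ∪ X \ S) hirr hX hε hdeg subset_union_left
    (union_subset (hUS.trans hS) sdiff_subset) hU hb hq ?_ ?_
  · rw [hBU, ← hg]
    exact le_fwd_of_le hd hm hQ (by linarith) hle
  · rw [hXB]
    exact le_bwd_of_lt hd (Nat.cast_nonneg _) hm hθ (by linarith)

lemma card_lt_two_mul {n m θ : ℝ} (hd : 0 < d) (hθ : 0 ≤ θ) (hn : d * n ≤ m)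
    (hm : m < (2 * d - 1) * θ) : n < 2 * θ := by
  refine lt_of_mul_lt_mul_left ?_ hd.le
  linarith

end Main

theorem stmt9_general {V : Type} [Fintype V] [DecidableEq V] (A : V → V → Prop) [DecidableRel A]
    (hirr : ∀ v, ¬ A v v)
    (m : ℕ) (hm : m = dArcs A univ univ)
    (d : ℝ) (hd : 1 < d) (havg : d * Fintype.card V ≤ m)
    (X Y : Finset V) (hXY : X ∪ Y = univ) (hdXY : Disjoint X Y)
    (heX : dArcs A X X = 0)
    (θ : ℤ) (hθ : IsLeast {t : ℤ | ∃ X₁ ⊆ X, t = |gap A X₁ (X \ X₁) Y|} θ)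
    (X' : Finset V) (hX' : X' = X.filter fun x => θ ≤ sVal A x)
    (g : ℤ) (hg : g = ∑ x ∈ X \ X', sVal A x)
    (b : ℝ) (hb : b = (∑ x ∈ X, ((deg A x : ℝ) - (sVal A x : ℝ))) / 2)
    (k : ℕ) (hk : 1 ≤ k) (hcard : X'.card = 2 * k + 1)
    (ε : ℝ) (hε : 0 ≤ ε) (hdeg : ∀ y ∈ Y, (deg A y : ℝ) ≤ ε ^ 2 * m) :
    (∃ V₁ V₂ : Finset V, V₁ ∪ V₂ = univ ∧ Disjoint V₁ V₂ ∧
        ((d - 1) / (2 * (2 * d - 1)) - ε) * m ≤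
          min (dArcs A V₁ V₂ : ℝ) (dArcs A V₂ V₁ : ℝ)) ∨
      ∀ v : ℕ → V,
          X' = (Icc 1 (2 * k + 1)).image v →
          Set.InjOn v ↑(Icc 1 (2 * k + 1)) →
          (∀ i ∈ Icc 1 (2 * k + 1), ∀ j ∈ Icc 1 (2 * k + 1), i ≤ j →
            sVal A (v j) ≤ sVal A (v i)) →
        (d ^ 2 + 2 * d - 1) / (d - 1) *
            (∑ j ∈ Icc k (2 * k - 1), (sVal A (v j) : ℝ)) -
          d * ((∑ j ∈ Icc 1 (k - 1), (sVal A (v j) : ℝ)) +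
            (sVal A (v (2 * k)) : ℝ) + (sVal A (v (2 * k + 1)) : ℝ)) +
          (d - 1) * (g : ℝ) + (d - 1) / (2 * d) * (dArcs A Y Y : ℝ) < b := by
  obtain rfl : Xᶜ = Y := compl_eq_iff_isCompl.2 ⟨hdXY, codisjoint_iff.2 hXY⟩
  obtain ⟨⟨X₁, hX₁, hgap⟩, hmin⟩ := hθ
  subst hm
  refine or_iff_not_imp_right.2 fun hno => ?_
  push Not at hno
  obtain ⟨v, hv, hinj, hanti, hle⟩ := hno
  suffices h : HasDirectedCuts A (((d - 1) / (2 * (2 * d - 1)) - ε) * dArcs A univ univ) from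
    h.elim fun S hS => ⟨S, Sᶜ, union_compl S, disjoint_compl_right, hS⟩
  rcases le_or_gt ((2 * d - 1) * θ) (dArcs A univ univ) with hbig | hsmall
  · refine hasDirectedCuts_of_mul_abs_gap_le hirr heX hε hdeg hd hX₁ ?_
    rwa [hgap, Int.cast_abs] at hbig
  · have hcardV : Fintype.card V < 2 * θ := by
      have hθ₀ : (0 : ℝ) ≤ θ := Int.cast_nonneg (hgap ▸ abs_nonneg _)
      exact_mod_cast card_lt_two_mul (by linarith) hθ₀ havg hsmall
    obtain ⟨U, hU, hUk, hmono, hQ⟩ := exists_monochromatic_subset_image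
      (f := sVal A) (fun x => inDeg A x ≤ outDeg A x) hk hinj hanti
    rw [← hv] at hU
    have hdom := add_sum_sdiff_le_sum_sub_two_mul_sum heX (fun X₁ hX₁ => hmin ⟨X₁, hX₁, rfl⟩) hX'
      hcardV hU (by omega)
    refine hasDirectedCuts_of_le_sum_sub_two_mul_sum hirr heX hε hdeg hd (hX' ▸ filter_subset _ X)
      hU hmono hb (by rw [hg]; push_cast; rfl) hsmall (by rw [← hg] at hdom; exact_mod_cast hdom)
      (by exact_mod_cast hQ) ?_ hle
    rw [hv, sum_image hinj, sum_Icc_one_two_mul_add_one _ hk]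

/-- Lemma 3.2(2). -/
theorem stmt9 {V : Type} [Fintype V] [DecidableEq V] (A : V → V → Prop) [DecidableRel A]
    (hirr : ∀ v, ¬ A v v)
    (m : ℕ) (hm : m = dArcs A Finset.univ Finset.univ)
    (d : ℕ) (hd : 4 ≤ d) (hout : ∀ x, d ≤ outDeg A x)
    (X Y : Finset V) (hXY : X ∪ Y = Finset.univ) (hdXY : Disjoint X Y)
    (heX : dArcs A X X = 0)
    (θ : ℤ) (hθ : IsLeast {t : ℤ | ∃ X₁ ⊆ X, t = |gap A X₁ (X \ X₁) Y|} θ)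
    (X' : Finset V) (hX' : X' = X.filter fun x => θ ≤ sVal A x)
    (g : ℤ) (hg : g = ∑ x ∈ X \ X', sVal A x)
    (b : ℝ) (hb : b = (∑ x ∈ X, ((deg A x : ℝ) - (sVal A x : ℝ))) / 2)
    (k : ℕ) (hk : 1 ≤ k) (hcard : X'.card = 2 * k + 1)
    (ε : ℝ) (hε : 0 < ε) (hdeg : ∀ y ∈ Y, (deg A y : ℝ) ≤ ε ^ 2 * m / 4)
    :
    (∃ V₁ V₂ : Finset V, V₁ ∪ V₂ = Finset.univ ∧ Disjoint V₁ V₂ ∧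
        (((d : ℝ) - 1) / (2 * (2 * (d : ℝ) - 1)) - ε) * m ≤
          min (dArcs A V₁ V₂ : ℝ) (dArcs A V₂ V₁ : ℝ)) ∨
      ∀ v : ℕ → V,
          X' = (Finset.Icc 1 (2 * k + 1)).image v →
          Set.InjOn v ↑(Finset.Icc 1 (2 * k + 1)) →
          (∀ i ∈ Finset.Icc 1 (2 * k + 1), ∀ j ∈ Finset.Icc 1 (2 * k + 1), i ≤ j →
            sVal A (v j) ≤ sVal A (v i)) →
        ((d : ℝ) ^ 2 + 2 * (d : ℝ) - 1) / ((d : ℝ) - 1) *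
            (∑ j ∈ Finset.Icc k (2 * k - 1), (sVal A (v j) : ℝ)) -
          (d : ℝ) * ((∑ j ∈ Finset.Icc 1 (k - 1), (sVal A (v j) : ℝ)) +
            (sVal A (v (2 * k)) : ℝ) + (sVal A (v (2 * k + 1)) : ℝ)) +
          ((d : ℝ) - 1) * (g : ℝ) + ((d : ℝ) - 1) / (2 * (d : ℝ)) * (dArcs A Y Y : ℝ) < b := by
  have hd' : (4 : ℝ) ≤ d := by exact_mod_cast hd
  have havg : (d : ℝ) * Fintype.card V ≤ m := by
    exact_mod_cast hm ▸ mul_card_le_dArcs_univ_univ hout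
  exact stmt9_general A hirr m hm d (by linarith) havg X Y hXY hdXY heX θ hθ X' hX' g hg b hb k hk
    hcard ε hε.le fun y hy => (hdeg y hy).trans (div_le_self (by positivity) (by norm_num))
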